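/- arXiv:2106.05535 — 4 statements merged into one kernel-verified Lean document; each statement's English description precedes it below -/
import Mathlib

section
/- Let n, m be natural numbers, A an n×n real matrix, B an n×m real matrix, P, Q n×n symmetric real matrices, and R an m×m symmetric real matrix with R + Bᵀ P B positive definite. Suppose P satisfies P = Aᵀ P A + Q − Aᵀ P B (R + Bᵀ P B)⁻¹ Bᵀ P A, and set K = −(R + Bᵀ P B)⁻¹ Bᵀ P A. Let x : ℕ → ℝⁿ satisfy x_{t+1} = (A + B K) x_t for all t, and set u_t = K x_t. Then for every T ∈ ℕ: ∑_{t=0}^{T−1} ( x_tᵀ Q x_t + u_tᵀ R u_t ) = x_0ᵀ P x_0 − x_Tᵀ P x_T. -/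
open Matrix Finset

/-- Telescoping cost identity for the closed-loop LQR trajectory: with `P`
solving the ARE and `K` the LQR gain, the accumulated cost over `T` steps
equals `x₀ᵀ P x₀ − x_Tᵀ P x_T`. -/
theorem lqr_telescoping_cost
    (n m : ℕ)
    (A : Matrix (Fin n) (Fin n) ℝ) (B : Matrix (Fin n) (Fin m) ℝ)
    (P Q : Matrix (Fin n) (Fin n) ℝ) (R : Matrix (Fin m) (Fin m) ℝ)
    (hP : P.IsSymm) (hQ : Q.IsSymm) (hR : R.IsSymm)
    (hpd : (R + Bᵀ * P * B).PosDef)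
    (hare : P = Aᵀ * P * A + Q -
        Aᵀ * P * B * (R + Bᵀ * P * B)⁻¹ * (Bᵀ * P * A))
    (K : Matrix (Fin m) (Fin n) ℝ)
    (hK : K = -((R + Bᵀ * P * B)⁻¹ * (Bᵀ * P * A)))
    (x : ℕ → Fin n → ℝ)
    (hx : ∀ t, x (t + 1) = (A + B * K).mulVec (x t))
    (u : ℕ → Fin m → ℝ)
    (hu : ∀ t, u t = K.mulVec (x t)) :
    ∀ T : ℕ,
      ∑ t ∈ Finset.range T,
          (x t ⬝ᵥ Q.mulVec (x t) + u t ⬝ᵥ R.mulVec (u t))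
        = x 0 ⬝ᵥ P.mulVec (x 0) - x T ⬝ᵥ P.mulVec (x T) := by
  have h1 : (R + Bᵀ * P * B) * K = -(Bᵀ * P * A) := by
    have hdet : IsUnit (R + Bᵀ * P * B).det := hpd.det_pos.ne'.isUnit
    rw [hK, Matrix.mul_neg, Matrix.mul_nonsing_inv_cancel_left _ _ hdet]
  have h2 : P = Aᵀ * P * A + Q + Aᵀ * P * B * K := by
    rw [hK, Matrix.mul_neg, ← sub_eq_add_neg, ← Matrix.mul_assoc (Aᵀ * P * B)]
    exact hare
  have h3 : Q + Kᵀ * R * K + (A + B * K)ᵀ * P * (A + B * K) = P := by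
    have e : Q + Kᵀ * R * K + (A + B * K)ᵀ * P * (A + B * K)
        = (Aᵀ * P * A + Q + Aᵀ * P * B * K)
          + Kᵀ * ((R + Bᵀ * P * B) * K + Bᵀ * P * A) := by
      simp only [Matrix.transpose_add, Matrix.transpose_mul, Matrix.add_mul, Matrix.mul_add,
        Matrix.mul_assoc]
      abel
    rw [e, h1, ← h2]
    simp
  have q : ∀ {k : ℕ} (M : Matrix (Fin k) (Fin n) ℝ) (N : Matrix (Fin k) (Fin k) ℝ)
      (v : Fin n → ℝ), M.mulVec v ⬝ᵥ N.mulVec (M.mulVec v) = v ⬝ᵥ (Mᵀ * N * M).mulVec v := by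
    intro k M N v
    rw [← Matrix.mulVec_mulVec, ← Matrix.mulVec_mulVec, Matrix.dotProduct_mulVec v Mᵀ,
      Matrix.vecMul_transpose]
  intro T
  induction T with
  | zero => simp
  | succ T ih =>
    have h4 : x T ⬝ᵥ P.mulVec (x T) = x T ⬝ᵥ Q.mulVec (x T) + u T ⬝ᵥ R.mulVec (u T)
        + x (T + 1) ⬝ᵥ P.mulVec (x (T + 1)) := by
      rw [hu, hx, q, q, ← dotProduct_add, ← dotProduct_add, ← Matrix.add_mulVec,
        ← Matrix.add_mulVec, h3]
    rw [Finset.sum_range_succ, ih, h4]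
    ring
end

section
/- Let n, m be natural numbers, A an n×n real matrix, B an n×m real matrix, P, Q n×n symmetric real matrices, and R an m×m symmetric real matrix with R + Bᵀ P B positive definite. Suppose P satisfies P = Aᵀ P A + Q − Aᵀ P B (R + Bᵀ P B)⁻¹ Bᵀ P A. Let x : ℕ → ℝⁿ and u : ℕ → ℝᵐ be arbitrary sequences satisfying x_{t+1} = A x_t + B u_t for all t. Then for every T ∈ ℕ: ∑_{t=0}^{T−1} ( x_tᵀ Q x_t + u_tᵀ R u_t ) ≥ x_0ᵀ P x_0 − x_Tᵀ P x_T. -/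
open Matrix Finset

/-- Lower bound on the accumulated quadratic cost of any admissible control
sequence, establishing the optimality of the LQR state-feedback controller. -/
theorem lqr_cost_lower_bound
    (n m : ℕ)
    (A : Matrix (Fin n) (Fin n) ℝ) (B : Matrix (Fin n) (Fin m) ℝ)
    (P Q : Matrix (Fin n) (Fin n) ℝ) (R : Matrix (Fin m) (Fin m) ℝ)
    (hP : P.IsSymm) (hQ : Q.IsSymm) (hR : R.IsSymm)
    (hpd : (R + Bᵀ * P * B).PosDef)
    (hare : P = Aᵀ * P * A + Q -
        Aᵀ * P * B * (R + Bᵀ * P * B)⁻¹ * (Bᵀ * P * A))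
    (x : ℕ → Fin n → ℝ) (u : ℕ → Fin m → ℝ)
    (hx : ∀ t, x (t + 1) = A.mulVec (x t) + B.mulVec (u t)) :
    ∀ T : ℕ,
      ∑ t ∈ Finset.range T,
          (x t ⬝ᵥ Q.mulVec (x t) + u t ⬝ᵥ R.mulVec (u t))
        ≥ x 0 ⬝ᵥ P.mulVec (x 0) - x T ⬝ᵥ P.mulVec (x T) := by
  have tr : ∀ {k l : ℕ} (M : Matrix (Fin k) (Fin l) ℝ) (a : Fin l → ℝ) (b : Fin k → ℝ),
      a ⬝ᵥ Mᵀ *ᵥ b = (M *ᵥ a) ⬝ᵥ b := by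
    intro k l M a b
    rw [dotProduct_mulVec, vecMul_transpose]
  have symm : ∀ {k : ℕ} (M : Matrix (Fin k) (Fin k) ℝ), M.IsSymm → ∀ a b : Fin k → ℝ,
      a ⬝ᵥ M *ᵥ b = b ⬝ᵥ M *ᵥ a := by
    intro k M hM a b
    have h := tr M a b
    rw [hM.eq] at h
    rw [h, dotProduct_comm]
  have step : ∀ (y : Fin n → ℝ) (v : Fin m → ℝ),
      y ⬝ᵥ P *ᵥ y - (A *ᵥ y + B *ᵥ v) ⬝ᵥ P *ᵥ (A *ᵥ y + B *ᵥ v)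
        ≤ y ⬝ᵥ Q *ᵥ y + v ⬝ᵥ R *ᵥ v := by
    intro y v
    obtain ⟨w, hw⟩ : ∃ w, w = (R + Bᵀ * P * B)⁻¹ *ᵥ ((Bᵀ * P * A) *ᵥ y) := ⟨_, rfl⟩
    have hu : IsUnit (R + Bᵀ * P * B).det := (Matrix.isUnit_iff_isUnit_det _).1 hpd.isUnit
    have hSw : (R + Bᵀ * P * B) *ᵥ w = Bᵀ *ᵥ (P *ᵥ (A *ᵥ y)) := by
      rw [hw, mulVec_mulVec, Matrix.mul_nonsing_inv _ hu, one_mulVec]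
      simp only [mulVec_mulVec, Matrix.mul_assoc]
    have hS : (R + Bᵀ * P * B).IsSymm := by
      have := hpd.isHermitian
      rwa [Matrix.IsHermitian, conjTranspose_eq_transpose_of_trivial] at this
    have h0 := hpd.posSemidef.dotProduct_mulVec_nonneg (v + w)
    rw [star_trivial, mulVec_add, dotProduct_add, add_dotProduct, add_dotProduct,
      symm _ hS w v, hSw, tr, tr] at h0
    have h1 : v ⬝ᵥ (R + Bᵀ * P * B) *ᵥ v = v ⬝ᵥ R *ᵥ v + (B *ᵥ v) ⬝ᵥ P *ᵥ (B *ᵥ v) := by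
      rw [add_mulVec, dotProduct_add, ← mulVec_mulVec, ← mulVec_mulVec, tr]
    have h2 : y ⬝ᵥ P *ᵥ y = (A *ᵥ y) ⬝ᵥ P *ᵥ (A *ᵥ y) + y ⬝ᵥ Q *ᵥ y
        - (A *ᵥ y) ⬝ᵥ P *ᵥ (B *ᵥ w) := by
      have e : P *ᵥ y = Aᵀ *ᵥ (P *ᵥ (A *ᵥ y)) + Q *ᵥ y - Aᵀ *ᵥ (P *ᵥ (B *ᵥ w)) := by
        conv_lhs => rw [hare]
        rw [hw]
        simp only [sub_mulVec, add_mulVec, mulVec_mulVec, Matrix.mul_assoc]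
      rw [e, dotProduct_sub, dotProduct_add, tr, tr]
    have h3 := symm P hP (A *ᵥ y) (B *ᵥ w)
    have h4 := symm P hP (A *ᵥ y) (B *ᵥ v)
    rw [mulVec_add, dotProduct_add, add_dotProduct, add_dotProduct]
    linarith
  intro T
  induction T with
  | zero => simp
  | succ T ih =>
    rw [Finset.sum_range_succ]
    have := step (x T) (u T)
    rw [← hx T] at this
    linarith
end

section
/- Let n, m be natural numbers, A an n×n real matrix, B an n×m real matrix, P, Q n×n symmetric real matrices with Q positive semidefinite, and R an m×m symmetric positive semidefinite real matrix with R + Bᵀ P B positive definite. Suppose P satisfies P = Aᵀ P A + Q − Aᵀ P B (R + Bᵀ P B)⁻¹ Bᵀ P A, set K = −(R + Bᵀ P B)⁻¹ Bᵀ P A, and let x_0 ∈ ℝⁿ. If (A + B K)^t x_0 → 0 as t → ∞, then the series ∑_{t=0}^{∞} ( x_tᵀ Q x_t + (K x_t)ᵀ R (K x_t) ) with x_t = (A + B K)^t x_0 converges and its sum equals x_0ᵀ P x_0. -/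
open Matrix Filter

/-- If the closed-loop state `(A + BK)^t x₀` converges to zero, the
infinite-horizon LQR cost series converges and sums to `x₀ᵀ P x₀`. -/
theorem lqr_infinite_horizon_cost
    (n m : ℕ)
    (A : Matrix (Fin n) (Fin n) ℝ) (B : Matrix (Fin n) (Fin m) ℝ)
    (P Q : Matrix (Fin n) (Fin n) ℝ) (R : Matrix (Fin m) (Fin m) ℝ)
    (hP : P.IsSymm) (hQ : Q.PosSemidef) (hR : R.PosSemidef)
    (hpd : (R + Bᵀ * P * B).PosDef)
    (hare : P = Aᵀ * P * A + Q -
        Aᵀ * P * B * (R + Bᵀ * P * B)⁻¹ * (Bᵀ * P * A))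
    (K : Matrix (Fin m) (Fin n) ℝ)
    (hK : K = -((R + Bᵀ * P * B)⁻¹ * (Bᵀ * P * A)))
    (x₀ : Fin n → ℝ)
    (hstab : Tendsto (fun t : ℕ => ((A + B * K) ^ t).mulVec x₀) atTop (nhds 0)) :
    HasSum
      (fun t : ℕ =>
        ((A + B * K) ^ t).mulVec x₀ ⬝ᵥ Q.mulVec (((A + B * K) ^ t).mulVec x₀) +
          K.mulVec (((A + B * K) ^ t).mulVec x₀) ⬝ᵥ
            R.mulVec (K.mulVec (((A + B * K) ^ t).mulVec x₀)))
      (x₀ ⬝ᵥ P.mulVec x₀) := by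
  have hdet : IsUnit (R + Bᵀ * P * B).det := (Matrix.isUnit_iff_isUnit_det _).1 hpd.isUnit
  have hSK : (R + Bᵀ * P * B) * K = -(Bᵀ * P * A) := by
    rw [hK, Matrix.mul_neg, Matrix.mul_nonsing_inv_cancel_left _ _ hdet]
  have hP1 : P = Aᵀ * P * A + Q + Aᵀ * P * B * K := by
    rw [hK, Matrix.mul_neg, ← sub_eq_add_neg, ← Matrix.mul_assoc (Aᵀ * P * B)]
    exact hare
  have hid : P = Q + Kᵀ * R * K + (A + B * K)ᵀ * P * (A + B * K) := by
    have h0 : Kᵀ * ((R + Bᵀ * P * B) * K) + Kᵀ * (Bᵀ * P * A) = 0 := by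
      rw [hSK, Matrix.mul_neg, neg_add_cancel]
    have h1 : Q + Kᵀ * R * K + (A + B * K)ᵀ * P * (A + B * K)
        = (Aᵀ * P * A + Q + Aᵀ * P * B * K)
          + (Kᵀ * ((R + Bᵀ * P * B) * K) + Kᵀ * (Bᵀ * P * A)) := by
      simp only [Matrix.transpose_add, Matrix.transpose_mul, Matrix.add_mul, Matrix.mul_add,
        Matrix.mul_assoc]
      abel
    rw [h1, h0, add_zero]
    exact hP1
  have hq : ∀ {k l : ℕ} (M : Matrix (Fin k) (Fin l) ℝ) (N : Matrix (Fin k) (Fin k) ℝ)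
      (x : Fin l → ℝ), x ⬝ᵥ (Mᵀ * N * M) *ᵥ x = (M *ᵥ x) ⬝ᵥ N *ᵥ (M *ᵥ x) := by
    intro k l M N x
    rw [Matrix.mul_assoc, ← Matrix.mulVec_mulVec, ← Matrix.mulVec_mulVec, Matrix.dotProduct_mulVec,
      Matrix.vecMul_transpose]
  have hstep : ∀ x : Fin n → ℝ, x ⬝ᵥ P *ᵥ x = x ⬝ᵥ Q *ᵥ x + (K *ᵥ x) ⬝ᵥ R *ᵥ (K *ᵥ x)
      + ((A + B * K) *ᵥ x) ⬝ᵥ P *ᵥ ((A + B * K) *ᵥ x) := by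
    intro x
    rw [← hq K R x, ← hq (A + B * K) P x, ← dotProduct_add, ← dotProduct_add,
      ← Matrix.add_mulVec, ← Matrix.add_mulVec, ← hid]
  rw [hasSum_iff_tendsto_nat_of_nonneg]
  · have hsum : ∀ N : ℕ, ∑ t ∈ Finset.range N,
        (((A + B * K) ^ t).mulVec x₀ ⬝ᵥ Q.mulVec (((A + B * K) ^ t).mulVec x₀) +
          K.mulVec (((A + B * K) ^ t).mulVec x₀) ⬝ᵥ
            R.mulVec (K.mulVec (((A + B * K) ^ t).mulVec x₀)))
        = x₀ ⬝ᵥ P *ᵥ x₀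
          - (((A + B * K) ^ N) *ᵥ x₀) ⬝ᵥ P *ᵥ (((A + B * K) ^ N) *ᵥ x₀) := by
      intro N
      induction N with
      | zero => simp
      | succ N ih =>
        rw [Finset.sum_range_succ, ih, pow_succ', ← Matrix.mulVec_mulVec]
        have := hstep (((A + B * K) ^ N) *ᵥ x₀)
        linarith
    simp_rw [hsum]
    have hc : Continuous (fun x : Fin n → ℝ => x ⬝ᵥ P *ᵥ x) := by fun_prop
    have ht := (hc.tendsto 0).comp hstab
    have ht2 := ht.const_sub (x₀ ⬝ᵥ P *ᵥ x₀)
    simpa [Function.comp_def] using ht2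
  · intro t
    have h1 := hQ.dotProduct_mulVec_nonneg (((A + B * K) ^ t) *ᵥ x₀)
    have h2 := hR.dotProduct_mulVec_nonneg (K *ᵥ (((A + B * K) ^ t) *ᵥ x₀))
    rw [star_trivial] at h1 h2
    exact add_nonneg h1 h2
end

section
/- Let n be a natural number, M an n×n real matrix, and P an n×n symmetric positive definite real matrix such that P − Mᵀ P M is positive definite. Then M^k → 0 as k → ∞ (the sequence of matrix powers converges to the zero matrix); in particular M^k x → 0 for every x ∈ ℝⁿ. -/
open Matrix Filter

lemma posDef_lower {n : ℕ} {Q : Matrix (Fin n) (Fin n) ℝ} (hQ : Q.PosDef) :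
    ∃ c : ℝ, 0 < c ∧ ∀ x : Fin n → ℝ, c * ‖x‖ ^ 2 ≤ x ⬝ᵥ (Q *ᵥ x) := by
  have hcont : Continuous (fun x : Fin n → ℝ => x ⬝ᵥ (Q *ᵥ x)) := by fun_prop
  have hpos : ∀ x : Fin n → ℝ, x ≠ 0 → 0 < x ⬝ᵥ (Q *ᵥ x) := fun x hx => by
    simpa using hQ.dotProduct_mulVec_pos hx
  rcases (Metric.sphere (0 : Fin n → ℝ) 1).eq_empty_or_nonempty with he | hne
  · refine ⟨1, one_pos, fun x => ?_⟩
    by_cases hx : x = 0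
    · simp [hx]
    · exfalso
      have : (‖x‖⁻¹ • x) ∈ Metric.sphere (0 : Fin n → ℝ) 1 := by
        simp [norm_smul, hx]
      simp [he] at this
  · obtain ⟨y, hy, hmin⟩ := (isCompact_sphere (0 : Fin n → ℝ) 1).exists_isMinOn hne
      hcont.continuousOn
    have hy1 : ‖y‖ = 1 := by simpa using hy
    have hy0 : y ≠ 0 := by rintro rfl; simp at hy1
    refine ⟨_, hpos y hy0, fun x => ?_⟩
    by_cases hx : x = 0
    · simp [hx]
    · have hm : (‖x‖⁻¹ • x) ∈ Metric.sphere (0 : Fin n → ℝ) 1 := by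
        simp [norm_smul, hx]
      have h := isMinOn_iff.1 hmin _ hm
      have hxn : 0 < ‖x‖ := norm_pos_iff.2 hx
      simp only [mulVec_smul, dotProduct_smul, smul_dotProduct, smul_eq_mul] at h
      calc _ ≤ (‖x‖⁻¹ * (‖x‖⁻¹ * (x ⬝ᵥ Q *ᵥ x))) * ‖x‖ ^ 2 := by gcongr
        _ = _ := by field_simp

/-- Discrete-time Lyapunov stability criterion: if `P ≻ 0` and
`P − Mᵀ P M ≻ 0`, then `M^k → 0`; in particular `M^k x → 0` for every `x`. -/
theorem lyapunov_stability
    (n : ℕ) (M P : Matrix (Fin n) (Fin n) ℝ)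
    (hP : P.PosDef) (hdec : (P - Mᵀ * P * M).PosDef) :
    Tendsto (fun k : ℕ => M ^ k) atTop (nhds 0) ∧
      ∀ x : Fin n → ℝ,
        Tendsto (fun k : ℕ => (M ^ k).mulVec x) atTop (nhds 0) := by
  have main : ∀ x : Fin n → ℝ,
      Tendsto (fun k : ℕ => (M ^ k).mulVec x) atTop (nhds 0) := by
    intro x
    obtain ⟨c, hc, hlow⟩ := posDef_lower hdec
    have hV : ∀ y : Fin n → ℝ, 0 ≤ y ⬝ᵥ (P *ᵥ y) := fun y => by
      simpa using hP.posSemidef.dotProduct_mulVec_nonneg y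
    have hstep : ∀ y : Fin n → ℝ,
        c * ‖y‖ ^ 2 ≤ y ⬝ᵥ (P *ᵥ y) - (M *ᵥ y) ⬝ᵥ (P *ᵥ (M *ᵥ y)) := fun y => by
      have h := hlow y
      have e : y ⬝ᵥ ((Mᵀ * P * M) *ᵥ y) = (M *ᵥ y) ⬝ᵥ (P *ᵥ (M *ᵥ y)) := by
        rw [← mulVec_mulVec, ← mulVec_mulVec, dotProduct_mulVec, vecMul_transpose]
      rwa [sub_mulVec, dotProduct_sub, e] at h
    have hsum : ∀ N : ℕ, ∑ k ∈ Finset.range N, c * ‖(M ^ k) *ᵥ x‖ ^ 2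
        ≤ x ⬝ᵥ (P *ᵥ x) - ((M ^ N) *ᵥ x) ⬝ᵥ (P *ᵥ ((M ^ N) *ᵥ x)) := by
      intro N
      induction N with
      | zero => simp
      | succ N ih =>
        have h := hstep ((M ^ N) *ᵥ x)
        have e : M *ᵥ ((M ^ N) *ᵥ x) = (M ^ (N + 1)) *ᵥ x := by
          rw [mulVec_mulVec, pow_succ']
        rw [e] at h
        rw [Finset.sum_range_succ]
        linarith
    have hs : Summable (fun k : ℕ => c * ‖(M ^ k) *ᵥ x‖ ^ 2) :=
      summable_of_sum_range_le (c := x ⬝ᵥ (P *ᵥ x)) (fun k => by positivity)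
        (fun N => by linarith [hsum N, hV ((M ^ N) *ᵥ x)])
    have h0 := ((summable_mul_left_iff hc.ne').1 hs).tendsto_atTop_zero
    have h1 := h0.sqrt
    simp only [Real.sqrt_sq (norm_nonneg _), Real.sqrt_zero] at h1
    exact tendsto_zero_iff_norm_tendsto_zero.2 h1
  refine ⟨?_, main⟩
  refine tendsto_pi_nhds.2 fun i => tendsto_pi_nhds.2 fun j => ?_
  have h := tendsto_pi_nhds.1 (main (Pi.single j 1)) i
  simpa using h
end
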